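/- Let v ∈ ℂ^m ⊗ ℂ^n be a unit vector with Schmidt coefficients α₁ ≥ α₂ ≥ … ≥ α_{min(m,n)} ≥ 0 and fix 1 ≤ k ≤ min(m,n). Then r_k^⊗(|v⟩⟨v|) = ‖|v⟩⟨v|‖_{S(k)} = Σ_{i=1}^k α_i². -/

import Mathlib

open scoped Kronecker ComplexOrder
open Matrix

namespace Ent

variable {ι κ : Type*} [Fintype ι] [Fintype κ]

/-- Inner product ⟨v,w⟩ = Σᵢ conj(v i) * (w i) (conjugate-linear in the first argument). -/
noncomputable def vinner (v w : ι → ℂ) : ℂ := dotProduct (star v) w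

/-- An elementary (product) tensor a ⊗ b in ℂ^ι ⊗ ℂ^κ. -/
def prodVec (a : ι → ℂ) (b : κ → ℂ) : ι × κ → ℂ := fun p => a p.1 * b p.2

/-- `v` has Schmidt rank at most `k`. -/
def SchmidtRankLE (k : ℕ) (v : ι × κ → ℂ) : Prop :=
  ∃ (a : Fin k → ι → ℂ) (b : Fin k → κ → ℂ), v = ∑ i, prodVec (a i) (b i)

/-- The rank-one operator |v⟩⟨w|. -/
noncomputable def ketBra (v : ι → ℂ) (w : κ → ℂ) : Matrix ι κ ℂ :=
  Matrix.vecMulVec v (star w)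

/-- A finite family of vectors is orthonormal. -/
def Orthonormal' {N : Type*} [DecidableEq N] (v : N → ι → ℂ) : Prop :=
  ∀ i j, vinner (v i) (v j) = if i = j then 1 else 0

/-- The S(k)-norm of `X ∈ M_ι ⊗ M_κ`. -/
noncomputable def SkNorm (k : ℕ) (X : Matrix (ι × κ) (ι × κ) ℂ) : ℝ :=
  sSup { r | ∃ v w : ι × κ → ℂ, vinner v v = 1 ∧ vinner w w = 1 ∧
    SchmidtRankLE k v ∧ SchmidtRankLE k w ∧
    r = ‖vinner v (X.mulVec w)‖ }

/-- The product numerical radius r_k^⊗. -/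
noncomputable def prodRad (k : ℕ) (Y : Matrix (ι × κ) (ι × κ) ℂ) : ℝ :=
  sSup { r | ∃ v : ι × κ → ℂ, vinner v v = 1 ∧ SchmidtRankLE k v ∧
    r = ‖vinner v (Y.mulVec v)‖ }

/-- The norm ‖·‖_{γ,k}. -/
noncomputable def gammaNorm (k : ℕ) (X : Matrix (ι × κ) (ι × κ) ℂ) : ℝ :=
  sInf { r | ∃ (N : ℕ) (c : Fin N → ℂ) (v w : Fin N → (ι × κ → ℂ)),
    (∀ i, vinner (v i) (v i) = 1 ∧ vinner (w i) (w i) = 1 ∧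
      SchmidtRankLE k (v i) ∧ SchmidtRankLE k (w i)) ∧
    X = ∑ i, c i • ketBra (v i) (w i) ∧
    r = ∑ i, ‖c i‖ }

/-- `ρ` is a density matrix. -/
def IsDensity (ρ : Matrix ι ι ℂ) : Prop := ρ.PosSemidef ∧ ρ.trace = 1

/-- `ρ` has Schmidt number at most `k`: it is a convex combination of projections onto
unit vectors of Schmidt rank at most `k`. -/
def SchmidtNumLE (k : ℕ) (ρ : Matrix (ι × κ) (ι × κ) ℂ) : Prop :=
  ∃ (N : ℕ) (p : Fin N → ℝ) (v : Fin N → (ι × κ → ℂ)),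
    (∀ i, 0 ≤ p i ∧ vinner (v i) (v i) = 1 ∧ SchmidtRankLE k (v i)) ∧
    (∑ i, p i) = 1 ∧ ρ = ∑ i, p i • ketBra (v i) (v i)

/-- The robustness norm R_k on Hermitian operators. -/
noncomputable def Rk (k : ℕ) (Y : Matrix (ι × κ) (ι × κ) ℂ) : ℝ :=
  sInf { r | ∃ (c₁ c₂ : ℝ) (ρ₁ ρ₂ : Matrix (ι × κ) (ι × κ) ℂ),
    0 ≤ c₁ ∧ 0 ≤ c₂ ∧ IsDensity ρ₁ ∧ IsDensity ρ₂ ∧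
    SchmidtNumLE k ρ₁ ∧ SchmidtNumLE k ρ₂ ∧
    Y = c₁ • ρ₁ - c₂ • ρ₂ ∧ r = c₁ + c₂ }

/-- `Y` is k-block positive: ⟨v|Y|v⟩ ≥ 0 for every unit vector of Schmidt rank at most `k`. -/
def KBlockPos (k : ℕ) (Y : Matrix (ι × κ) (ι × κ) ℂ) : Prop :=
  ∀ v : ι × κ → ℂ, vinner v v = 1 → SchmidtRankLE k v →
    0 ≤ (vinner v (Y.mulVec v)).re

/-- Dual of a norm on matrices, w.r.t. the Hilbert–Schmidt inner product ⟨W,X⟩ = Tr(Wᴴ X). -/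
noncomputable def dualNormM (f : Matrix ι κ ℂ → ℝ) (X : Matrix ι κ ℂ) : ℝ :=
  sSup { r | ∃ W : Matrix ι κ ℂ, f W ≤ 1 ∧ r = ‖(Wᴴ * X).trace‖ }

/-- Dual of a norm, computed in the real Hilbert space of Hermitian matrices with the
Hilbert–Schmidt inner product ⟨W,Y⟩ = Tr(WY). -/
noncomputable def dualNormHerm (f : Matrix ι ι ℂ → ℝ) (Y : Matrix ι ι ℂ) : ℝ :=
  sSup { r | ∃ W : Matrix ι ι ℂ, W.IsHermitian ∧ f W ≤ 1 ∧ r = |((W * Y).trace).re| }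

/-- The Frobenius norm of a matrix. -/
noncomputable def frobNorm (X : Matrix ι κ ℂ) : ℝ :=
  Real.sqrt (∑ i, ∑ j, Complex.normSq (X i j))

/-- The (k,2)-norm: ‖X‖_{(k,2)} = sup { |Tr(XY)| : rank Y ≤ k, ‖Y‖_F ≤ 1 }. -/
noncomputable def kNorm (k : ℕ) (X : Matrix ι κ ℂ) : ℝ :=
  sSup { r | ∃ Y : Matrix κ ι ℂ, Y.rank ≤ k ∧ frobNorm Y ≤ 1 ∧
    r = ‖(X * Y).trace‖ }

/-- The trace norm: the sum of the singular values, i.e. of the square roots of the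
eigenvalues of Xᴴ X. -/
noncomputable def traceNorm [DecidableEq κ] (X : Matrix ι κ ℂ) : ℝ :=
  ∑ i, Real.sqrt ((Matrix.isHermitian_conjTranspose_mul_self X).eigenvalues i)

/-- The s(k) vector norm: sup of |⟨u,w⟩| over unit vectors u of Schmidt rank at most k. -/
noncomputable def skVecNorm (k : ℕ) (w : ι × κ → ℂ) : ℝ :=
  sSup { r | ∃ u : ι × κ → ℂ, vinner u u = 1 ∧ SchmidtRankLE k u ∧
    r = ‖vinner u w‖ }

/-- Dual of a norm on vectors. -/
noncomputable def dualNormV (f : (ι × κ → ℂ) → ℝ) (v : ι × κ → ℂ) : ℝ :=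
  sSup { r | ∃ w : ι × κ → ℂ, f w ≤ 1 ∧ r = ‖vinner w v‖ }

/-- The realignment map, L(X)_{(i,k),(j,l)} = X_{(i,j),(k,l)}. -/
def realign {m n : ℕ} (X : Matrix (Fin m × Fin n) (Fin m × Fin n) ℂ) :
    Matrix (Fin m × Fin m) (Fin n × Fin n) ℂ :=
  fun p q => X (p.1, q.1) (p.2, q.2)

/-- The projective tensor norm on M_{m,n} ⊗ M_{m,n}. -/
noncomputable def projNorm {m n : ℕ} (Z : Matrix (Fin m × Fin m) (Fin n × Fin n) ℂ) : ℝ :=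
  sInf { r | ∃ (N : ℕ) (A B : Fin N → Matrix (Fin m) (Fin n) ℂ),
    Z = ∑ i, A i ⊗ₖ B i ∧ r = ∑ i, traceNorm (A i) * traceNorm (B i) }

/-!
The operator `|v⟩⟨v|` has matrix elements `⟨x|v⟩⟨v|y⟩`, so both suprema equal the square of the
largest overlap `|⟨u|v⟩|` of `v` with a unit vector `u` of Schmidt rank at most `k`.

Such a `u` can be written `∑ⱼ fⱼ ⊗ gⱼ` with at most `k` orthonormal vectors `fⱼ`. Cauchy–Schwarz
bounds `|⟨u|v⟩|²` by `∑ⱼ ‖(⟨fⱼ| ⊗ I) v‖² = ∑ᵢ αᵢ² pᵢ`, where `pᵢ = ∑ⱼ |⟨fⱼ|aᵢ⟩|²`. By Bessel's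
inequality, for the `fⱼ` and for the `aᵢ`, the weights satisfy `pᵢ ≤ 1` and `∑ᵢ pᵢ ≤ k`, so
`∑ᵢ αᵢ² pᵢ` is at most the sum of the `k` largest `αᵢ²`. The normalized truncation
of the Schmidt decomposition to its `k` leading terms attains this bound.
-/

open WithLp

section InnerProduct

variable {J : Type*}

lemma vinner_eq_inner (x y : ι → ℂ) : vinner x y = inner ℂ (toLp 2 x) (toLp 2 y) := by
  rw [EuclideanSpace.inner_toLp_toLp, dotProduct_comm, vinner]

lemma vinner_self_eq_norm_sq (x : ι → ℂ) : vinner x x = (‖toLp 2 x‖ : ℂ) ^ 2 := by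
  rw [vinner_eq_inner, inner_self_eq_norm_sq_to_K]
  rfl

lemma vinner_self_eq_one_iff (x : ι → ℂ) : vinner x x = 1 ↔ ‖toLp 2 x‖ = 1 := by
  rw [vinner_self_eq_norm_sq, ← Complex.ofReal_pow, Complex.ofReal_eq_one,
    pow_eq_one_iff_of_nonneg (norm_nonneg _) two_ne_zero]

lemma norm_vinner_comm (x y : ι → ℂ) : ‖vinner x y‖ = ‖vinner y x‖ := by
  rw [vinner_eq_inner, vinner_eq_inner, norm_inner_symm]

lemma norm_vinner_le (x y : ι → ℂ) : ‖vinner x y‖ ≤ ‖toLp 2 x‖ * ‖toLp 2 y‖ := by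
  rw [vinner_eq_inner]
  exact norm_inner_le_norm _ _

lemma vinner_smul_left (c : ℂ) (x y : ι → ℂ) : vinner (c • x) y = star c * vinner x y := by
  rw [vinner, star_smul, smul_dotProduct, smul_eq_mul, vinner]

lemma vinner_smul_right (c : ℂ) (x y : ι → ℂ) : vinner x (c • y) = c * vinner x y := by
  rw [vinner, dotProduct_smul, smul_eq_mul, vinner]

lemma vinner_sum_left (s : Finset J) (x : J → ι → ℂ) (y : ι → ℂ) :
    vinner (∑ i ∈ s, x i) y = ∑ i ∈ s, vinner (x i) y := by
  simp only [vinner, star_sum, sum_dotProduct]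

lemma vinner_sum_right (s : Finset J) (x : ι → ℂ) (y : J → ι → ℂ) :
    vinner x (∑ i ∈ s, y i) = ∑ i ∈ s, vinner x (y i) := by
  simp only [vinner, dotProduct_sum]

lemma vinner_ketBra_mulVec (x v : ι → ℂ) (y w : κ → ℂ) :
    vinner x (ketBra v w *ᵥ y) = vinner x v * vinner w y := by
  simp [vinner, ketBra, vecMulVec_mulVec, mul_comm]

lemma orthonormal'_iff [DecidableEq J] {f : J → ι → ℂ} :
    Orthonormal' f ↔ Orthonormal ℂ fun i => toLp 2 (f i) := by
  simp only [Orthonormal', orthonormal_iff_ite, vinner_eq_inner]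

namespace Orthonormal'

variable [DecidableEq J] {f : J → ι → ℂ}

lemma norm_eq_one (hf : Orthonormal' f) (i : J) : ‖toLp 2 (f i)‖ = 1 :=
  (orthonormal'_iff.mp hf).1 i

lemma sum_norm_vinner_sq_le [Fintype J] (hf : Orthonormal' f) (x : ι → ℂ) :
    ∑ i, ‖vinner (f i) x‖ ^ 2 ≤ ‖toLp 2 x‖ ^ 2 := by
  simp only [vinner_eq_inner]
  exact (orthonormal'_iff.mp hf).sum_inner_products_le _

lemma vinner_sum_smul_of_subset (hf : Orthonormal' f) {s t : Finset J} (hst : s ⊆ t)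
    (c d : J → ℂ) :
    vinner (∑ i ∈ s, c i • f i) (∑ i ∈ t, d i • f i) = ∑ i ∈ s, star (c i) * d i := by
  rw [vinner_sum_left]
  refine Finset.sum_congr rfl fun i hi => ?_
  simp [vinner_sum_right, vinner_smul_left, vinner_smul_right, hf _ _, hst hi, mul_comm]

lemma norm_sum_smul_sq (hf : Orthonormal' f) (s : Finset J) (c : J → ℂ) :
    ‖toLp 2 (∑ i ∈ s, c i • f i)‖ ^ 2 = ∑ i ∈ s, ‖c i‖ ^ 2 := by
  have h := hf.vinner_sum_smul_of_subset (Finset.Subset.refl s) c c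
  simp only [vinner_self_eq_norm_sq, Complex.star_def, Complex.conj_mul'] at h
  exact_mod_cast h

end Orthonormal'

end InnerProduct

section ProductVectors

variable {J : Type*}

/-- The contraction `(⟨f| ⊗ I) v` of a bipartite vector along its first factor, by which overlaps
with product vectors become inner products in the second factor. -/
noncomputable def contractLeft (f : ι → ℂ) (v : ι × κ → ℂ) : κ → ℂ :=
  fun y => vinner f fun x => v (x, y)

lemma vinner_prodVec_left (f : ι → ℂ) (g : κ → ℂ) (v : ι × κ → ℂ) :
    vinner (prodVec f g) v = vinner g (contractLeft f v) := by
  simp only [vinner, contractLeft, dotProduct, prodVec, Fintype.sum_prod_type_right,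
    Finset.mul_sum, Pi.star_apply, star_mul']
  exact Finset.sum_congr rfl fun y _ => Finset.sum_congr rfl fun x _ => by ring

lemma contractLeft_prodVec {Y : Type*} (f a : ι → ℂ) (b : Y → ℂ) :
    contractLeft f (prodVec a b) = vinner f a • b := by
  ext y
  simp only [contractLeft, vinner, dotProduct, prodVec, Pi.smul_apply, smul_eq_mul,
    Finset.sum_mul, mul_assoc]

lemma contractLeft_sum_smul {Y : Type*} (f : ι → ℂ) (s : Finset J) (c : J → ℂ)
    (v : J → ι × Y → ℂ) :
    contractLeft f (∑ i ∈ s, c i • v i) = ∑ i ∈ s, c i • contractLeft f (v i) := by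
  ext y
  simp only [contractLeft, Finset.sum_apply, Pi.smul_apply, smul_eq_mul, ← vinner_smul_right,
    ← vinner_sum_right]
  congr 1
  ext x
  simp

lemma vinner_prodVec (a c : ι → ℂ) (b d : κ → ℂ) :
    vinner (prodVec a b) (prodVec c d) = vinner a c * vinner b d := by
  rw [vinner_prodVec_left, contractLeft_prodVec, vinner_smul_right]

variable [DecidableEq J]

lemma orthonormal'_prodVec {a : J → ι → ℂ} {b : J → κ → ℂ} (ha : Orthonormal' a)
    (hb : Orthonormal' b) : Orthonormal' fun i => prodVec (a i) (b i) := by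
  intro i j
  simp only [vinner_prodVec, ha i j, hb i j, ite_zero_mul_ite_zero, and_self, mul_one]

variable [Fintype J]

lemma Orthonormal'.norm_sum_prodVec_sq {f : J → ι → ℂ} (hf : Orthonormal' f) (g : J → κ → ℂ) :
    ‖toLp 2 (∑ j, prodVec (f j) (g j))‖ ^ 2 = ∑ j, ‖toLp 2 (g j)‖ ^ 2 := by
  have h : vinner (∑ j, prodVec (f j) (g j)) (∑ j, prodVec (f j) (g j)) =
      ∑ j, vinner (g j) (g j) := by
    simp [vinner_sum_left, vinner_sum_right, vinner_prodVec, hf _ _]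
  simp only [vinner_self_eq_norm_sq] at h
  exact_mod_cast h

lemma Orthonormal'.norm_vinner_sum_prodVec_sq_le {f : J → ι → ℂ} (hf : Orthonormal' f)
    (g : J → κ → ℂ) (v : ι × κ → ℂ) :
    ‖vinner (∑ j, prodVec (f j) (g j)) v‖ ^ 2 ≤
      ‖toLp 2 (∑ j, prodVec (f j) (g j))‖ ^ 2 * ∑ j, ‖toLp 2 (contractLeft (f j) v)‖ ^ 2 := by
  have h : ‖vinner (∑ j, prodVec (f j) (g j)) v‖ ≤
      ∑ j, ‖toLp 2 (g j)‖ * ‖toLp 2 (contractLeft (f j) v)‖ := by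
    simp only [vinner_sum_left, vinner_prodVec_left]
    exact norm_sum_le_of_le _ fun j _ => norm_vinner_le _ _
  calc ‖vinner (∑ j, prodVec (f j) (g j)) v‖ ^ 2
      ≤ (∑ j, ‖toLp 2 (g j)‖ * ‖toLp 2 (contractLeft (f j) v)‖) ^ 2 := by gcongr
    _ ≤ (∑ j, ‖toLp 2 (g j)‖ ^ 2) * ∑ j, ‖toLp 2 (contractLeft (f j) v)‖ ^ 2 :=
      Finset.sum_mul_sq_le_sq_mul_sq _ _ _
    _ = _ := by rw [hf.norm_sum_prodVec_sq]

lemma norm_contractLeft_sum_smul_prodVec_sq (f : ι → ℂ) (c : J → ℂ) (a : J → ι → ℂ)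
    {b : J → κ → ℂ} (hb : Orthonormal' b) :
    ‖toLp 2 (contractLeft f (∑ i, c i • prodVec (a i) (b i)))‖ ^ 2 =
      ∑ i, ‖c i‖ ^ 2 * ‖vinner f (a i)‖ ^ 2 := by
  simp only [contractLeft_sum_smul, contractLeft_prodVec, smul_smul, hb.norm_sum_smul_sq,
    norm_mul, mul_pow]

end ProductVectors

section SchmidtRank

variable {J : Type*} {k : ℕ}

lemma smul_prodVec {X Y : Type*} (c : ℂ) (a : X → ℂ) (b : Y → ℂ) :
    c • prodVec a b = prodVec (c • a) b := by
  ext p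
  simp [prodVec, mul_assoc]

lemma schmidtRankLE_sum_prodVec {X Y : Type*} (s : Finset J) (a : J → X → ℂ) (b : J → Y → ℂ) :
    SchmidtRankLE s.card (∑ i ∈ s, prodVec (a i) (b i)) := by
  refine ⟨fun j => a (s.equivFin.symm j), fun j => b (s.equivFin.symm j), ?_⟩
  rw [← Finset.sum_coe_sort, ← s.equivFin.symm.sum_comp]

lemma SchmidtRankLE.smul {X Y : Type*} {u : X × Y → ℂ} (hu : SchmidtRankLE k u) (c : ℂ) :
    SchmidtRankLE k (c • u) := by
  obtain ⟨a, b, rfl⟩ := hu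
  exact ⟨fun i => c • a i, b, by simp only [Finset.smul_sum, smul_prodVec]⟩

lemma exists_orthonormal'_sum_smul [Fintype J] (x : J → ι → ℂ) :
    ∃ r ≤ Fintype.card J, ∃ f : Fin r → ι → ℂ, Orthonormal' f ∧
      ∃ t : J → Fin r → ℂ, ∀ l, x l = ∑ j, t l j • f j := by
  let W := Submodule.span ℂ (Set.range fun l => toLp 2 (x l))
  let B := stdOrthonormalBasis ℂ W
  let y : J → W := fun l => ⟨toLp 2 (x l), Submodule.subset_span ⟨l, rfl⟩⟩
  refine ⟨Module.finrank ℂ W, finrank_range_le_card _, fun j => ofLp (B j : EuclideanSpace ℂ ι),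
    orthonormal'_iff.mpr (B.orthonormal.comp_linearIsometry W.subtypeₗᵢ),
    fun l => B.repr (y l), fun l => ?_⟩
  have hy : ∑ j, B.repr (y l) j • (B j : EuclideanSpace ℂ ι) = toLp 2 (x l) := by
    simpa using congrArg Subtype.val (B.sum_repr (y l))
  simpa using congrArg ofLp hy.symm

lemma SchmidtRankLE.exists_orthonormal' {Y : Type*} {u : ι × Y → ℂ} (hu : SchmidtRankLE k u) :
    ∃ r ≤ k, ∃ f : Fin r → ι → ℂ, Orthonormal' f ∧
      ∃ g : Fin r → Y → ℂ, u = ∑ j, prodVec (f j) (g j) := by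
  obtain ⟨c, d, rfl⟩ := hu
  obtain ⟨r, hr, f, hf, t, hc⟩ := exists_orthonormal'_sum_smul c
  refine ⟨r, by simpa using hr, f, hf, fun j => ∑ l, t l j • d l, ?_⟩
  ext ⟨x, y⟩
  simp only [Finset.sum_apply, prodVec, hc, Pi.smul_apply, smul_eq_mul, Finset.sum_mul,
    Finset.mul_sum]
  rw [Finset.sum_comm]
  exact Finset.sum_congr rfl fun j _ => Finset.sum_congr rfl fun l _ => by ring

end SchmidtRank

section LargestCoefficients

variable {J : Type*} [Fintype J]

lemma sum_mul_le_sum_of_threshold {β p : J → ℝ} {s : Finset J} {t : ℝ} (ht : 0 ≤ t)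
    (hβs : ∀ i ∈ s, t ≤ β i) (hβsc : ∀ i ∉ s, β i ≤ t) (hp0 : ∀ i, 0 ≤ p i) (hp1 : ∀ i, p i ≤ 1)
    (hp : ∑ i, p i ≤ s.card) : ∑ i, β i * p i ≤ ∑ i ∈ s, β i := by
  classical
  have hterm (i : J) : (β i - t) * p i ≤ if i ∈ s then β i - t else 0 := by
    split_ifs with hi
    · exact mul_le_of_le_one_right (sub_nonneg.mpr (hβs i hi)) (hp1 i)
    · exact mul_nonpos_of_nonpos_of_nonneg (sub_nonpos.mpr (hβsc i hi)) (hp0 i)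
  calc ∑ i, β i * p i = ∑ i, (β i - t) * p i + t * ∑ i, p i := by
        simp only [sub_mul, Finset.sum_sub_distrib, Finset.mul_sum, sub_add_cancel]
    _ ≤ (∑ i, if i ∈ s then β i - t else 0) + t * s.card := by
        gcongr with i
        exact hterm i
    _ = ∑ i ∈ s, β i := by
        rw [Finset.sum_ite_mem, Finset.univ_inter, Finset.sum_sub_distrib, Finset.sum_const,
          nsmul_eq_mul]
        ring

variable [DecidableEq J]

lemma sum_sum_norm_vinner_sq_le_card {K : Type*} [Fintype K] [DecidableEq K] {f : K → ι → ℂ}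
    {a : J → ι → ℂ} (hf : Orthonormal' f) (ha : Orthonormal' a) :
    ∑ i, ∑ j, ‖vinner (f j) (a i)‖ ^ 2 ≤ Fintype.card K := by
  rw [Finset.sum_comm]
  calc ∑ j, ∑ i, ‖vinner (f j) (a i)‖ ^ 2 ≤ ∑ _j : K, (1 : ℝ) := by
        gcongr with j
        simpa [norm_vinner_comm (f j), hf.norm_eq_one] using ha.sum_norm_vinner_sq_le (f j)
    _ = Fintype.card K := by simp

variable {c : J → ℂ} {a : J → ι → ℂ} {b : J → κ → ℂ} {s : Finset J}

lemma norm_vinner_sum_smul_prodVec_sq_le (ha : Orthonormal' a) (hb : Orthonormal' b)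
    (hs : s.Nonempty) (hc : ∀ i ∈ s, ∀ j ∉ s, ‖c j‖ ≤ ‖c i‖) {u : ι × κ → ℂ}
    (hu : SchmidtRankLE s.card u) :
    ‖vinner u (∑ i, c i • prodVec (a i) (b i))‖ ^ 2 ≤ ‖toLp 2 u‖ ^ 2 * ∑ i ∈ s, ‖c i‖ ^ 2 := by
  obtain ⟨r, hr, f, hf, g, rfl⟩ := hu.exists_orthonormal'
  obtain ⟨i₀, hi₀, hmin⟩ := s.exists_min_image (fun i => ‖c i‖) hs
  refine (hf.norm_vinner_sum_prodVec_sq_le g _).trans ?_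
  gcongr
  calc ∑ j, ‖toLp 2 (contractLeft (f j) (∑ i, c i • prodVec (a i) (b i)))‖ ^ 2
      = ∑ i, ‖c i‖ ^ 2 * ∑ j, ‖vinner (f j) (a i)‖ ^ 2 := by
        simp only [norm_contractLeft_sum_smul_prodVec_sq _ _ _ hb, Finset.mul_sum]
        exact Finset.sum_comm
    _ ≤ ∑ i ∈ s, ‖c i‖ ^ 2 := by
        refine sum_mul_le_sum_of_threshold (sq_nonneg ‖c i₀‖) (fun i hi => ?_) (fun i hi => ?_)
          (fun i => by positivity) (fun i => ?_) ?_
        · gcongr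
          exact hmin i hi
        · gcongr
          exact hc i₀ hi₀ i hi
        · simpa [ha.norm_eq_one] using hf.sum_norm_vinner_sq_le (a i)
        · exact (sum_sum_norm_vinner_sq_le_card hf ha).trans (by simpa using hr)

end LargestCoefficients

section Overlap

variable {k : ℕ} {u v : ι × κ → ℂ}

lemma skVecNorm_nonneg (k : ℕ) (v : ι × κ → ℂ) : 0 ≤ skVecNorm k v := by
  refine Real.sSup_nonneg ?_
  rintro _ ⟨u, -, -, rfl⟩
  exact norm_nonneg _

lemma norm_vinner_le_skVecNorm (hu : vinner u u = 1) (hku : SchmidtRankLE k u) :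
    ‖vinner u v‖ ≤ skVecNorm k v := by
  refine le_csSup ⟨‖toLp 2 v‖, ?_⟩ ⟨u, hu, hku, rfl⟩
  rintro _ ⟨w, hw, -, rfl⟩
  simpa [(vinner_self_eq_one_iff w).mp hw] using norm_vinner_le w v

lemma norm_vinner_le_skVecNorm_mul_norm (hku : SchmidtRankLE k u) :
    ‖vinner u v‖ ≤ skVecNorm k v * ‖toLp 2 u‖ := by
  rcases eq_or_ne u 0 with rfl | hu
  · simp [vinner]
  have hpos : 0 < ‖toLp 2 u‖ := by simpa using hu
  have hunit : vinner ((‖toLp 2 u‖⁻¹ : ℂ) • u) ((‖toLp 2 u‖⁻¹ : ℂ) • u) = 1 := by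
    rw [vinner_self_eq_one_iff, toLp_smul, norm_smul]
    simp [hpos.ne']
  have h := norm_vinner_le_skVecNorm (v := v) hunit (hku.smul _)
  rw [vinner_smul_left, norm_mul] at h
  rw [mul_comm, ← inv_mul_le_iff₀ hpos]
  simpa using h

lemma norm_vinner_ketBra_mulVec_le_skVecNorm_sq {x y : ι × κ → ℂ} (hx : vinner x x = 1)
    (hy : vinner y y = 1) (hkx : SchmidtRankLE k x) (hky : SchmidtRankLE k y) :
    ‖vinner x (ketBra v v *ᵥ y)‖ ≤ skVecNorm k v ^ 2 := by
  rw [vinner_ketBra_mulVec, norm_mul, norm_vinner_comm v y, sq]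
  exact mul_le_mul (norm_vinner_le_skVecNorm hx hkx) (norm_vinner_le_skVecNorm hy hky)
    (norm_nonneg _) (skVecNorm_nonneg k v)

lemma norm_vinner_ketBra_mulVec_self (u v : ι → ℂ) :
    ‖vinner u (ketBra v v *ᵥ u)‖ = ‖vinner u v‖ ^ 2 := by
  rw [vinner_ketBra_mulVec, norm_mul, norm_vinner_comm v u, sq]

lemma skVecNorm_sq_le {M : ℝ} (hM : 0 ≤ M)
    (h : ∀ u, vinner u u = 1 → SchmidtRankLE k u → ‖vinner u v‖ ^ 2 ≤ M) :
    skVecNorm k v ^ 2 ≤ M := by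
  rw [← Real.le_sqrt (skVecNorm_nonneg k v) hM]
  refine Real.sSup_le ?_ (Real.sqrt_nonneg M)
  rintro _ ⟨u, hu, hku, rfl⟩
  exact Real.le_sqrt_of_sq_le (h u hu hku)

lemma SkNorm_nonneg (k : ℕ) (X : Matrix (ι × κ) (ι × κ) ℂ) : 0 ≤ SkNorm k X := by
  refine Real.sSup_nonneg ?_
  rintro _ ⟨x, y, -, -, -, -, rfl⟩
  exact norm_nonneg _

lemma prodRad_nonneg (k : ℕ) (X : Matrix (ι × κ) (ι × κ) ℂ) : 0 ≤ prodRad k X := by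
  refine Real.sSup_nonneg ?_
  rintro _ ⟨x, -, -, rfl⟩
  exact norm_nonneg _

theorem prodRad_ketBra_self (k : ℕ) (v : ι × κ → ℂ) :
    prodRad k (ketBra v v) = skVecNorm k v ^ 2 := by
  have hle : ∀ r ∈ { r | ∃ u : ι × κ → ℂ, vinner u u = 1 ∧ SchmidtRankLE k u ∧
      r = ‖vinner u (ketBra v v *ᵥ u)‖ }, r ≤ skVecNorm k v ^ 2 := by
    rintro _ ⟨u, hu, hku, rfl⟩
    exact norm_vinner_ketBra_mulVec_le_skVecNorm_sq hu hu hku hku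
  refine le_antisymm (Real.sSup_le hle (sq_nonneg _))
    (skVecNorm_sq_le (prodRad_nonneg k _) fun u hu hku => ?_)
  rw [← norm_vinner_ketBra_mulVec_self]
  exact le_csSup ⟨_, hle⟩ ⟨u, hu, hku, rfl⟩

theorem SkNorm_ketBra_self (k : ℕ) (v : ι × κ → ℂ) :
    SkNorm k (ketBra v v) = skVecNorm k v ^ 2 := by
  have hle : ∀ r ∈ { r | ∃ x y : ι × κ → ℂ, vinner x x = 1 ∧ vinner y y = 1 ∧
      SchmidtRankLE k x ∧ SchmidtRankLE k y ∧ r = ‖vinner x (ketBra v v *ᵥ y)‖ },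
      r ≤ skVecNorm k v ^ 2 := by
    rintro _ ⟨x, y, hx, hy, hkx, hky, rfl⟩
    exact norm_vinner_ketBra_mulVec_le_skVecNorm_sq hx hy hkx hky
  refine le_antisymm (Real.sSup_le hle (sq_nonneg _))
    (skVecNorm_sq_le (SkNorm_nonneg k _) fun u hu hku => ?_)
  rw [← norm_vinner_ketBra_mulVec_self]
  exact le_csSup ⟨_, hle⟩ ⟨u, u, hu, hu, hku, hku, rfl⟩

variable {J : Type*} [Fintype J] [DecidableEq J] {c : J → ℂ} {a : J → ι → ℂ} {b : J → κ → ℂ}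

lemma sum_norm_sq_le_skVecNorm_sq (ha : Orthonormal' a) (hb : Orthonormal' b) (s : Finset J) :
    ∑ i ∈ s, ‖c i‖ ^ 2 ≤ skVecNorm s.card (∑ i, c i • prodVec (a i) (b i)) ^ 2 := by
  set S : ℝ := ∑ i ∈ s, ‖c i‖ ^ 2 with hS
  set M := skVecNorm s.card (∑ i, c i • prodVec (a i) (b i))
  let u := ∑ i ∈ s, c i • prodVec (a i) (b i)
  have hab : Orthonormal' fun i => prodVec (a i) (b i) := orthonormal'_prodVec ha hb
  have hku : SchmidtRankLE s.card u := by
    simpa only [u, smul_prodVec] using schmidtRankLE_sum_prodVec s (fun i => c i • a i) b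
  have hoverlap : vinner u (∑ i, c i • prodVec (a i) (b i)) = S := by
    simp [u, hS, hab.vinner_sum_smul_of_subset s.subset_univ, Complex.conj_mul']
  have hnorm : ‖toLp 2 u‖ ^ 2 = S := hab.norm_sum_smul_sq s c
  have hSM : S ≤ M * ‖toLp 2 u‖ := by
    have h := norm_vinner_le_skVecNorm_mul_norm (v := ∑ i, c i • prodVec (a i) (b i)) hku
    rwa [hoverlap, Complex.norm_of_nonneg (hnorm ▸ sq_nonneg _)] at h
  rw [← hnorm, sq] at hSM
  rw [← hnorm]
  rcases (norm_nonneg (toLp 2 u)).eq_or_lt with hu | hu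
  · simpa [← hu] using sq_nonneg M
  · gcongr
    exact le_of_mul_le_mul_right hSM hu

theorem skVecNorm_sum_smul_prodVec_sq (ha : Orthonormal' a) (hb : Orthonormal' b) {s : Finset J}
    (hs : s.Nonempty) (hc : ∀ i ∈ s, ∀ j ∉ s, ‖c j‖ ≤ ‖c i‖) :
    skVecNorm s.card (∑ i, c i • prodVec (a i) (b i)) ^ 2 = ∑ i ∈ s, ‖c i‖ ^ 2 := by
  refine le_antisymm (skVecNorm_sq_le (by positivity) fun u hu hku => ?_)
    (sum_norm_sq_le_skVecNorm_sq ha hb s)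
  simpa [(vinner_self_eq_one_iff u).mp hu] using
    norm_vinner_sum_smul_prodVec_sq_le ha hb hs hc hku

theorem prodRad_SkNorm_of_pure_general (ha : Orthonormal' a) (hb : Orthonormal' b) {s : Finset J}
    (hs : s.Nonempty) (hc : ∀ i ∈ s, ∀ j ∉ s, ‖c j‖ ≤ ‖c i‖)
    (hv : v = ∑ i, c i • prodVec (a i) (b i)) :
    prodRad s.card (ketBra v v) = ∑ i ∈ s, ‖c i‖ ^ 2 ∧
      SkNorm s.card (ketBra v v) = ∑ i ∈ s, ‖c i‖ ^ 2 := by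
  rw [prodRad_ketBra_self, SkNorm_ketBra_self, hv, skVecNorm_sum_smul_prodVec_sq ha hb hs hc,
    and_self]

end Overlap

/-- for a unit vector `v` with Schmidt coefficients
`α 0 ≥ α 1 ≥ ⋯ ≥ α (min m n - 1) ≥ 0` (presented via a Schmidt decomposition; the 0-based
`α i` is the paper's `α_{i+1}`), we have `r_k^⊗(|v⟩⟨v|) = ‖|v⟩⟨v|‖_{S(k)} = Σ_{i=1}^k α_i²`. -/
theorem prodRad_SkNorm_of_pure {m n k : ℕ} (hk1 : 1 ≤ k) (hk : k ≤ min m n)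
    (v : Fin m × Fin n → ℂ) (hv : vinner v v = 1)
    (α : ℕ → ℝ) (a : ℕ → Fin m → ℂ) (b : ℕ → Fin n → ℂ)
    (hα0 : ∀ i, i < min m n → 0 ≤ α i)
    (hαmono : ∀ i j, i ≤ j → j < min m n → α j ≤ α i)
    (ha : ∀ i j, i < min m n → j < min m n → vinner (a i) (a j) = if i = j then 1 else 0)
    (hb : ∀ i j, i < min m n → j < min m n → vinner (b i) (b j) = if i = j then 1 else 0)
    (hdec : v = ∑ i ∈ Finset.range (min m n), α i • prodVec (a i) (b i)) :
    prodRad k (ketBra v v) = ∑ i ∈ Finset.range k, α i ^ 2 ∧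
    SkNorm k (ketBra v v) = ∑ i ∈ Finset.range k, α i ^ 2 := by
  let s : Finset (Fin (min m n)) := Finset.univ.map (Fin.castLEEmb hk)
  have hmem (i : Fin (min m n)) : i ∈ s ↔ (i : ℕ) < k := by
    simp [s, ← Set.mem_range, Fin.range_castLE]
  have hs : s.Nonempty := ⟨⟨0, by omega⟩, (hmem _).mpr hk1⟩
  have hα : ∀ i ∈ s, ∀ j ∉ s, ‖(α j : ℂ)‖ ≤ ‖(α i : ℂ)‖ := by
    intro i hi j hj
    rw [hmem] at hi hj
    simpa [abs_of_nonneg, hα0 i i.2, hα0 j j.2] using hαmono i j (by omega) j.2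
  have hv' : v = ∑ i : Fin (min m n), (α i : ℂ) • prodVec (a i) (b i) := by
    simp only [hdec, Finset.sum_range, Complex.coe_smul]
  simpa [s, Finset.sum_range] using prodRad_SkNorm_of_pure_general
    (fun i j => by simpa [Fin.ext_iff] using ha i j i.2 j.2)
    (fun i j => by simpa [Fin.ext_iff] using hb i j i.2 j.2) hs hα hv'

end Ent
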